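/- Let f(x) = x². If for some n ∈ ℕ the in-degrees in the root q-Jaco graph satisfy d⁻(v_n) = d⁻(v_{n+1}), then the Jaconian sets of J_n(x²) and J_{n+1}(x²) have different cardinalities: |𝒥(J_n(x²))| ≠ |𝒥(J_{n+1}(x²))|. -/

import Mathlib

/-- In-degree of vertex `v_j` in the (root) Jaco graph with incidence function `f`:
`d⁻(v_j) = |{ i : 1 ≤ i < j, i + f i − d⁻(v_i) ≥ j }|`. -/
noncomputable def jacoIn (f : ℕ → ℕ) (j : ℕ) : ℕ :=
  Nat.strongRecOn j (fun j ih =>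
    (((Finset.Ico 1 j).attach).filter (fun i : {x // x ∈ Finset.Ico 1 j} =>
      j ≤ i.1 + f i.1 - ih i.1 (Finset.mem_Ico.mp i.2).2)).card)

/-- The arc `(v_i, v_j)` is present in the Jaco graph iff `1 ≤ i < j` and
`i + f i − d⁻(v_i) ≥ j`. -/
def jacoArc (f : ℕ → ℕ) (i j : ℕ) : Prop :=
  1 ≤ i ∧ i < j ∧ j ≤ i + f i - jacoIn f i

noncomputable instance (f : ℕ → ℕ) (i j : ℕ) : Decidable (jacoArc f i j) := by
  unfold jacoArc; infer_instance

/-- The underlying undirected simple graph `J*_n(f)` of the finite Jaco graph `J_n(f)`,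
on vertex set `{v_1, …, v_n}` (vertex `x : Fin n` represents `v_{x+1}`). -/
def jacoGraph (f : ℕ → ℕ) (n : ℕ) : SimpleGraph (Fin n) :=
  SimpleGraph.fromRel (fun x y => jacoArc f (x.1 + 1) (y.1 + 1))

noncomputable instance (f : ℕ → ℕ) (n : ℕ) : DecidableRel (jacoGraph f n).Adj := fun x y =>
  decidable_of_iff
    (x ≠ y ∧ (jacoArc f (x.1 + 1) (y.1 + 1) ∨ jacoArc f (y.1 + 1) (x.1 + 1)))
    (by unfold jacoGraph; exact (SimpleGraph.fromRel_adj (fun a b : Fin n => jacoArc f (a.1 + 1) (b.1 + 1)) x y).symm)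

/-!
Let `f` be strictly increasing, let `r i = i + f i - d⁻(v_i)` bound the out-neighbours of `v_i`,
and let `s i = i - d⁻(v_i)`. In-degrees grow by at most one from a vertex to the next, so `s` is
monotone and `r = f + s` is strictly increasing; the degree of `v_i` in `J*_n(f)` is
`min (f i) (n - s i)`, an increasing function capped by a decreasing one.

The in-degree stalls at `n` exactly when `n = r k = f k + s k` for some `k`. Then the maximum
degree in `J*_n(f)` is `f k`, attained at the `i ∈ [k, n]` with `s i = s k`. If `s (k + 1) = s k`,
the maximum in `J*_{n+1}(f)` is `f k + 1`, attained at the same vertices except `v_k`. Otherwise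
`s (k + 1) = s k + 1`, so `v_k` is the only Jaconian vertex of `J_n(f)`, whereas `v_k` and
`v_{k+1}` are both Jaconian in `J_{n+1}(f)`.
-/

section

open Finset

/-- The reach of `v_i`: the largest `j` for which `(v_i, v_j)` is an arc of the infinite root graph,
or at most `i` when `v_i` has no out-neighbour. -/
noncomputable def jacoReach (f : ℕ → ℕ) (i : ℕ) : ℕ := i + f i - jacoIn f i

/-- The in-deficit of `v_i`: the number of `j ∈ [1, i]`, including `j = i`, for which `(v_j, v_i)`
is not an arc. The degree of `v_i` in `J*_n(f)` is at most `n` minus this number. -/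
noncomputable def jacoInDeficit (f : ℕ → ℕ) (i : ℕ) : ℕ := i - jacoIn f i

/-- The Jaconian set `𝒥(J_n(f))`, with vertex `x : Fin n` representing `v_{x+1}`. -/
noncomputable def jaconianSet (f : ℕ → ℕ) (n : ℕ) : Finset (Fin n) :=
  {v | (jacoGraph f n).degree v = (jacoGraph f n).maxDegree}

section InDegree

variable (f : ℕ → ℕ)

theorem jacoIn_eq_card (j : ℕ) : jacoIn f j = #{i ∈ Ico 1 j | j ≤ jacoReach f i} := by
  have unfold_once :
      jacoIn f j = #{i ∈ (Ico 1 j).attach | j ≤ jacoReach f i.1} := by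
    rw [jacoIn, Nat.strongRecOn_eq]
    rfl
  rw [unfold_once, filter_attach (fun i => j ≤ jacoReach f i), card_map, card_attach]

theorem jacoIn_le_sub_one (j : ℕ) : jacoIn f j ≤ j - 1 := by
  rw [jacoIn_eq_card, ← Nat.card_Ico]
  exact card_filter_le _ _

theorem jacoIn_succ_le (j : ℕ) : jacoIn f (j + 1) ≤ jacoIn f j + 1 := by
  rw [jacoIn_eq_card f (j + 1), jacoIn_eq_card f j]
  refine (card_le_card fun i hi => ?_).trans (card_insert_le j _)
  simp only [mem_filter, mem_Ico, mem_insert] at hi ⊢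
  omega

theorem jacoInDeficit_monotone : Monotone (jacoInDeficit f) :=
  monotone_nat_of_le_succ fun i => by
    have := jacoIn_succ_le f i
    unfold jacoInDeficit
    omega

theorem jacoReach_eq_add (i : ℕ) : jacoReach f i = f i + jacoInDeficit f i := by
  have := jacoIn_le_sub_one f i
  unfold jacoReach jacoInDeficit
  omega

variable {f}

theorem jacoIn_succ_add_card {j : ℕ} (hj : 1 ≤ j) (hreach : j ≤ jacoReach f j) :
    jacoIn f (j + 1) + #{i ∈ Icc 1 j | jacoReach f i = j} = jacoIn f j + 1 := by
  have hsplit : #{i ∈ Icc 1 j | j + 1 ≤ jacoReach f i} + #{i ∈ Icc 1 j | jacoReach f i = j} =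
      #{i ∈ Icc 1 j | j ≤ jacoReach f i} := by
    rw [← card_union_of_disjoint (disjoint_filter.2 fun i _ hlt heq => by omega), ← filter_or]
    exact congrArg card (filter_congr fun i _ => by omega)
  rw [jacoIn_eq_card f (j + 1), Ico_add_one_right_eq_Icc, hsplit, ← Ico_insert_right hj,
    filter_insert, if_pos hreach, card_insert_of_notMem (by simp), ← jacoIn_eq_card]

end InDegree

section Degree

variable {f : ℕ → ℕ} {n : ℕ}

theorem card_filter_fin_add_one (n : ℕ) (p : ℕ → Prop) [DecidablePred p] :
    #{v : Fin n | p (v + 1)} = #{i ∈ Icc 1 n | p i} := by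
  refine card_nbij (fun v => v.1 + 1) (fun v hv => ?_) (fun v _ w _ hvw => ?_) fun i hi => ?_
  · simp only [coe_filter, mem_univ, true_and, Set.mem_ofPred_eq] at hv
    simp only [coe_filter, mem_Icc, Set.mem_ofPred_eq]
    exact ⟨by omega, hv⟩
  · exact Fin.ext (Nat.succ_injective hvw)
  · simp only [coe_filter, mem_Icc, Set.mem_ofPred_eq] at hi
    obtain ⟨⟨hi_pos, hin⟩, hpi⟩ := hi
    refine ⟨⟨i - 1, by omega⟩, ?_, Nat.sub_add_cancel hi_pos⟩
    simpa [Nat.sub_add_cancel hi_pos] using hpi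

theorem card_filter_jacoArc_left {i : ℕ} (hin : i ≤ n) :
    #{j ∈ Icc 1 n | jacoArc f j i} = jacoIn f i := by
  rw [jacoIn_eq_card]
  refine congrArg card (ext fun j => ?_)
  simp only [mem_filter, mem_Icc, mem_Ico]
  unfold jacoArc jacoReach
  omega

theorem card_filter_jacoArc_right {i : ℕ} (hi : 1 ≤ i) :
    #{j ∈ Icc 1 n | jacoArc f i j} = min (jacoReach f i) n - i := by
  rw [← Nat.card_Ioc]
  refine congrArg card (ext fun j => ?_)
  simp only [mem_filter, mem_Icc, mem_Ioc]
  unfold jacoArc jacoReach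
  omega

theorem jacoGraph_adj_iff {v w : Fin n} :
    (jacoGraph f n).Adj v w ↔ jacoArc f (w + 1) (v + 1) ∨ jacoArc f (v + 1) (w + 1) := by
  rw [jacoGraph, SimpleGraph.fromRel_adj, or_comm, and_iff_right_iff_imp]
  rintro (h | h) rfl <;> exact h.2.1.false

theorem degree_jacoGraph_eq_add (v : Fin n) :
    (jacoGraph f n).degree v =
      jacoIn f (v + 1) + (min (jacoReach f (v + 1)) n - (v + 1)) := by
  have hdisj : Disjoint {j ∈ Icc 1 n | jacoArc f j (v + 1)} {j ∈ Icc 1 n | jacoArc f (v + 1) j} :=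
    disjoint_filter.2 fun j _ h_in h_out => h_in.2.1.asymm h_out.2.1
  rw [← SimpleGraph.card_neighborFinset_eq_degree, SimpleGraph.neighborFinset_eq_filter]
  simp only [jacoGraph_adj_iff]
  rw [card_filter_fin_add_one n fun j => jacoArc f j (v + 1) ∨ jacoArc f (v + 1) j, filter_or,
    card_union_of_disjoint hdisj, card_filter_jacoArc_left v.2,
    card_filter_jacoArc_right v.1.succ_pos]

theorem degree_jacoGraph_eq_min (v : Fin n) (hv : jacoIn f (v + 1) ≤ f (v + 1)) :
    (jacoGraph f n).degree v = min (f (v + 1)) (n - jacoInDeficit f (v + 1)) := by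
  have := jacoIn_le_sub_one f (v + 1)
  rw [degree_jacoGraph_eq_add, jacoReach, jacoInDeficit]
  omega

end Degree

section StrictMono

variable {f : ℕ → ℕ} (hf : StrictMonoOn f (Set.Ici 1))
include hf

theorem jacoIn_le_apply {i : ℕ} (hi : 1 ≤ i) : jacoIn f i ≤ f i := by
  have hshift : StrictMono fun m => f (m + 1) := fun a b hab =>
    hf (Nat.succ_pos a) (Nat.succ_pos b) (Nat.succ_lt_succ hab)
  calc jacoIn f i ≤ i - 1 := jacoIn_le_sub_one f i
    _ ≤ f (i - 1 + 1) := hshift.le_apply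
    _ = f i := by rw [Nat.sub_add_cancel hi]

theorem le_jacoReach {i : ℕ} (hi : 1 ≤ i) : i ≤ jacoReach f i := by
  have := jacoIn_le_apply hf hi
  unfold jacoReach
  omega

theorem jacoReach_strictMonoOn : StrictMonoOn (jacoReach f) (Set.Ici 1) := by
  simp only [funext (jacoReach_eq_add f)]
  exact hf.add_monotone ((jacoInDeficit_monotone f).monotoneOn _)

theorem jacoIn_le_jacoIn_succ {j : ℕ} (hj : 1 ≤ j) : jacoIn f j ≤ jacoIn f (j + 1) := by
  have hfibre : #{i ∈ Icc 1 j | jacoReach f i = j} ≤ 1 := by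
    refine card_le_one.2 fun a ha b hb => ?_
    simp only [mem_filter, mem_Icc] at ha hb
    exact (jacoReach_strictMonoOn hf).injOn ha.1.1 hb.1.1 (ha.2.trans hb.2.symm)
  have := jacoIn_succ_add_card hj (le_jacoReach hf hj)
  omega

theorem exists_jacoReach_eq {n : ℕ} (hn : 1 ≤ n) (h : jacoIn f n = jacoIn f (n + 1)) :
    ∃ k, 1 ≤ k ∧ jacoReach f k = n := by
  have hfibre := jacoIn_succ_add_card hn (le_jacoReach hf hn)
  obtain ⟨k, hk⟩ : {i ∈ Icc 1 n | jacoReach f i = n}.Nonempty := card_pos.1 (by omega)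
  simp only [mem_filter, mem_Icc] at hk
  exact ⟨k, hk.1.1, hk.2⟩

theorem jacoInDeficit_succ_le {j : ℕ} (hj : 1 ≤ j) :
    jacoInDeficit f (j + 1) ≤ jacoInDeficit f j + 1 := by
  have := jacoIn_le_jacoIn_succ hf hj
  unfold jacoInDeficit
  omega

theorem maxDegree_jacoGraph_eq {n p c : ℕ} (hp : 1 ≤ p) (hpn : p ≤ n)
    (hn : n = c + jacoInDeficit f p) (hbelow : ∀ i, 1 ≤ i → i < p → f i ≤ c) (hle : c ≤ f p) :
    (jacoGraph f n).maxDegree = c := by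
  apply le_antisymm
  · refine SimpleGraph.maxDegree_le_of_forall_degree_le _ _ fun v => ?_
    rw [degree_jacoGraph_eq_min v (jacoIn_le_apply hf v.1.succ_pos)]
    rcases lt_or_ge (v.1 + 1) p with hvp | hpv
    · exact (min_le_left _ _).trans (hbelow _ v.1.succ_pos hvp)
    · have := jacoInDeficit_monotone f hpv
      omega
  · have hdeg := (jacoGraph f n).degree_le_maxDegree ⟨p - 1, by omega⟩
    rw [degree_jacoGraph_eq_min _ (jacoIn_le_apply hf (Nat.succ_pos _))] at hdeg
    simp only [Nat.sub_add_cancel hp] at hdeg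
    omega

theorem card_jaconianSet (n : ℕ) :
    #(jaconianSet f n) =
      #{i ∈ Icc 1 n | min (f i) (n - jacoInDeficit f i) = (jacoGraph f n).maxDegree} := by
  rw [← card_filter_fin_add_one, jaconianSet]
  refine congrArg card (filter_congr fun v _ => ?_)
  rw [degree_jacoGraph_eq_min v (jacoIn_le_apply hf v.1.succ_pos)]

theorem card_jaconianSet_eq_card_filter_jacoInDeficit {n p c : ℕ} (hp : 1 ≤ p) (hpn : p ≤ n)
    (hn : n = c + jacoInDeficit f p) (hbelow : ∀ i, 1 ≤ i → i < p → f i < c) (hle : c ≤ f p) :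
    #(jaconianSet f n) = #{i ∈ Icc p n | jacoInDeficit f i = jacoInDeficit f p} := by
  rw [card_jaconianSet hf,
    maxDegree_jacoGraph_eq hf hp hpn hn (fun i hi hip => (hbelow i hi hip).le) hle]
  refine congrArg card (ext fun i => ?_)
  simp only [mem_filter, mem_Icc]
  rcases lt_or_ge i p with hip | hpi
  · have hfi : 1 ≤ i → f i < c := fun hi => hbelow i hi hip
    omega
  · have hfi : f p ≤ f i := hf.monotoneOn hp (hp.trans hpi) hpi
    have hmono := jacoInDeficit_monotone f hpi
    have no_truncation : jacoInDeficit f i ≤ i := Nat.sub_le _ _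
    omega

variable {k : ℕ} (hk : 1 ≤ k)
include hk

theorem card_jaconianSet_jacoReach :
    #(jaconianSet f (jacoReach f k)) =
      #{i ∈ Icc k (jacoReach f k) | jacoInDeficit f i = jacoInDeficit f k} :=
  card_jaconianSet_eq_card_filter_jacoInDeficit hf hk (le_jacoReach hf hk) (jacoReach_eq_add f k)
    (fun _ hi hik => hf hi hk hik) le_rfl

theorem card_jaconianSet_jacoReach_succ_lt
    (hstall : jacoIn f (jacoReach f k) = jacoIn f (jacoReach f k + 1))
    (heq : jacoInDeficit f (k + 1) = jacoInDeficit f k) :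
    #(jaconianSet f (jacoReach f k + 1)) < #(jaconianSet f (jacoReach f k)) := by
  have hkr := le_jacoReach hf hk
  have hlast : jacoInDeficit f k < jacoInDeficit f (jacoReach f k + 1) := by
    have := jacoIn_le_sub_one f (jacoReach f k)
    have hmono := jacoInDeficit_monotone f hkr
    unfold jacoInDeficit at hmono ⊢
    omega
  rw [card_jaconianSet_jacoReach hf hk,
    card_jaconianSet_eq_card_filter_jacoInDeficit hf (c := f k + 1) k.succ_pos (by omega)
      (by rw [heq, jacoReach_eq_add]; omega)
      (fun i hi hik => Nat.lt_succ_of_le (hf.monotoneOn hi hk (by omega)))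
      (hf hk k.succ_pos k.lt_succ_self), heq]
  refine card_lt_card ((ssubset_iff_of_subset fun i hi => ?_).2 ⟨k, ?_, ?_⟩)
  · simp only [mem_filter, mem_Icc] at hi ⊢
    have hne : i ≠ jacoReach f k + 1 := by
      rintro rfl
      omega
    omega
  · simp [hkr]
  · simp

theorem card_jaconianSet_jacoReach_eq_one
    (hlt : jacoInDeficit f k < jacoInDeficit f (k + 1)) :
    #(jaconianSet f (jacoReach f k)) = 1 := by
  rw [card_jaconianSet_jacoReach hf hk, card_eq_one]
  refine ⟨k, ext fun i => ?_⟩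
  simp only [mem_filter, mem_Icc, mem_singleton]
  constructor
  · rintro ⟨⟨hki, -⟩, hi⟩
    by_contra hne
    have := jacoInDeficit_monotone f (show k + 1 ≤ i by omega)
    omega
  · rintro rfl
    exact ⟨⟨le_rfl, le_jacoReach hf hk⟩, rfl⟩

theorem one_lt_card_jaconianSet_jacoReach_succ
    (hlt : jacoInDeficit f k < jacoInDeficit f (k + 1)) :
    1 < #(jaconianSet f (jacoReach f k + 1)) := by
  have hkr := le_jacoReach hf hk
  have hr := jacoReach_eq_add f k
  have hsucc : jacoInDeficit f (k + 1) = jacoInDeficit f k + 1 :=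
    (jacoInDeficit_succ_le hf hk).antisymm hlt
  have hfk : f k < f (k + 1) := hf hk k.succ_pos k.lt_succ_self
  have hmax : (jacoGraph f (jacoReach f k + 1)).maxDegree = f k :=
    maxDegree_jacoGraph_eq hf (p := k + 1) k.succ_pos (Nat.succ_le_succ hkr) (by omega)
      (fun i hi hik => hf.monotoneOn hi hk (Nat.le_of_lt_succ hik)) hfk.le
  rw [card_jaconianSet hf, hmax, one_lt_card]
  simp only [mem_filter, mem_Icc]
  exact ⟨k, by omega, k + 1, by omega, by omega⟩

end StrictMono

theorem qJaco_sq_jaconian_card_changes_general {f : ℕ → ℕ} (hf : StrictMonoOn f (Set.Ici 1))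
    {n : ℕ} (hn : 1 ≤ n) (h : jacoIn f n = jacoIn f (n + 1)) :
    #(jaconianSet f n) ≠ #(jaconianSet f (n + 1)) := by
  obtain ⟨k, hk, rfl⟩ := exists_jacoReach_eq hf hn h
  rcases (jacoInDeficit_monotone f k.le_succ).eq_or_lt with heq | hlt
  · exact (card_jaconianSet_jacoReach_succ_lt hf hk h heq.symm).ne'
  · rw [card_jaconianSet_jacoReach_eq_one hf hk hlt]
    exact (one_lt_card_jaconianSet_jacoReach_succ hf hk hlt).ne

end

/-- For `f(x) = x²`: if `d⁻(v_n) = d⁻(v_{n+1})` for some `n ∈ ℕ`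
(`n ≥ 1`), then the Jaconian sets (sets of vertices of maximum degree) of
`J_n(x²)` and `J_{n+1}(x²)` have different cardinalities. -/
theorem qJaco_sq_jaconian_card_changes (n : ℕ) (hn : 1 ≤ n)
    (h : jacoIn (fun x => x ^ 2) n = jacoIn (fun x => x ^ 2) (n + 1)) :
    (Finset.univ.filter (fun v : Fin n =>
        (jacoGraph (fun x => x ^ 2) n).degree v =
          (jacoGraph (fun x => x ^ 2) n).maxDegree)).card ≠
    (Finset.univ.filter (fun v : Fin (n + 1) =>
        (jacoGraph (fun x => x ^ 2) (n + 1)).degree v =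
          (jacoGraph (fun x => x ^ 2) (n + 1)).maxDegree)).card :=
  qJaco_sq_jaconian_card_changes_general ((Nat.pow_left_strictMono two_ne_zero).strictMonoOn _) hn h
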